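/- Smart-style DLP reduction over dual numbers: let P, Q ∈ E(𝔽_p)[p] with Q = nP, and let P̃, Q̃ ∈ Ẽ(𝔽_p[ε]) be any lifts of P, Q to a (possibly non-canonical) lift Ẽ of E. Then p·P̃ and p·Q̃ lie in Θ, and p·(nP̃) - p·Q̃ = O (the identity). Consequently, writing p·P̃ = O_a and p·Q̃ = O_b with a, b ∈ 𝔽_p, one has n·a = b in 𝔽_p; if a ≠ 0 then n ≡ b·a^{-1} mod p. -/

import Mathlib

noncomputable section
open scoped Classical

/-- The inclusion `K → K[ε]` of the base ring into the dual numbers. -/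
abbrev ιD {K : Type*} [CommRing K] (a : K) : DualNumber K := TrivSqZeroExt.inl a

/-- The element `ε` of the dual numbers `K[ε]`. -/
abbrev εD (K : Type*) [CommRing K] : DualNumber K := DualNumber.eps

/-- A projective coordinate triple `(X, Y, Z)`. -/
abbrev Pt (R : Type*) := R × R × R

/-- The projective Weierstrass equation `Y²Z = X³ + A·XZ² + B·Z³` for the curve
`y² = x³ + Ax + B`. -/
def OnCurve {R : Type*} [CommRing R] (A B : R) (P : Pt R) : Prop :=
  P.2.1 ^ 2 * P.2.2 = P.1 ^ 3 + A * P.1 * P.2.2 ^ 2 + B * P.2.2 ^ 3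

/-- The standard projective addition law on the Weierstrass curve
`y² = x³ + Ax + B`, written via the complete addition formulas
(valid over any commutative ring, agreeing with the usual chord–tangent law). -/
def padd {R : Type*} [CommRing R] (A B : R) (P Q : Pt R) : Pt R :=
  let X1 := P.1; let Y1 := P.2.1; let Z1 := P.2.2
  let X2 := Q.1; let Y2 := Q.2.1; let Z2 := Q.2.2
  let b3 := 3 * B
  ((X1 * Y2 + X2 * Y1) * (Y1 * Y2 - A * (X1 * Z2 + X2 * Z1) - b3 * Z1 * Z2)
      - (Y1 * Z2 + Y2 * Z1) * (A * X1 * X2 + b3 * (X1 * Z2 + X2 * Z1) - A ^ 2 * Z1 * Z2),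
    (3 * X1 * X2 + A * Z1 * Z2) * (A * X1 * X2 + b3 * (X1 * Z2 + X2 * Z1) - A ^ 2 * Z1 * Z2)
      + (Y1 * Y2 + A * (X1 * Z2 + X2 * Z1) + b3 * Z1 * Z2)
        * (Y1 * Y2 - A * (X1 * Z2 + X2 * Z1) - b3 * Z1 * Z2),
    (Y1 * Z2 + Y2 * Z1) * (Y1 * Y2 + A * (X1 * Z2 + X2 * Z1) + b3 * Z1 * Z2)
      + (X1 * Y2 + X2 * Y1) * (3 * X1 * X2 + A * Z1 * Z2))

/-- The `n`-fold sum `n • P` on the curve, starting from the identity `(0 : 1 : 0)`. -/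
def pmul {R : Type*} [CommRing R] (A B : R) (n : ℕ) (P : Pt R) : Pt R :=
  (fun Q => padd A B Q P)^[n] (0, 1, 0)

/-- Equality of projective points: the coordinates agree up to a unit scalar. -/
def ProjEq {R : Type*} [CommRing R] (P Q : Pt R) : Prop :=
  ∃ u : Rˣ, Q = ((u : R) * P.1, (u : R) * P.2.1, (u : R) * P.2.2)

/-- The point at infinity `O_k = (kε : 1 : 0)` of the lift of the curve to `K[ε]`. -/
def Oinf {K : Type*} [CommRing K] (k : K) : Pt (DualNumber K) :=
  (ιD k * εD K, 1, 0)

section CommRing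

variable {R S : Type*} [CommRing R] [CommRing S]

lemma padd_smul (A B c d : R) (P Q : Pt R) :
    padd A B (c • P) (d • Q) = (c ^ 2 * d ^ 2) • padd A B P Q := by
  refine Prod.ext ?_ (Prod.ext ?_ ?_) <;> simp only [padd, Prod.smul_fst, Prod.smul_snd,
    smul_eq_mul] <;> ring

lemma padd_comm (A B : R) (P Q : Pt R) : padd A B P Q = padd A B Q P := by
  refine Prod.ext ?_ (Prod.ext ?_ ?_) <;> simp only [padd] <;> ring

lemma padd_zero_left (A B : R) (Q : Pt R) : padd A B 0 Q = 0 := by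
  have h := padd_smul A B 0 1 0 Q
  simpa using h

lemma padd_infinity_left (A B : R) (Q : Pt R) : padd A B (0, 1, 0) Q = Q.2.1 • Q := by
  refine Prod.ext ?_ (Prod.ext ?_ ?_) <;> simp only [padd, Prod.smul_fst, Prod.smul_snd,
    smul_eq_mul] <;> ring

lemma pmul_zero (A B : R) (P : Pt R) : pmul A B 0 P = (0, 1, 0) := rfl

lemma pmul_succ (A B : R) (n : ℕ) (P : Pt R) :
    pmul A B (n + 1) P = padd A B (pmul A B n P) P :=
  Function.iterate_succ_apply' _ _ _

lemma pmul_ne_zero_of_le {A B : R} {P : Pt R} {m n : ℕ} (hmn : m ≤ n)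
    (h : pmul A B n P ≠ 0) : pmul A B m P ≠ 0 := by
  induction n, hmn using Nat.le_induction with
  | base => exact h
  | succ n _ ih =>
    refine ih fun h0 => h ?_
    rw [pmul_succ, h0, padd_zero_left]

lemma projEq_iff {P Q : Pt R} : ProjEq P Q ↔ ∃ u : Rˣ, Q = (u : R) • P := Iff.rfl

lemma ProjEq.symm {P Q : Pt R} (h : ProjEq P Q) : ProjEq Q P := by
  obtain ⟨u, rfl⟩ := projEq_iff.1 h
  exact projEq_iff.2 ⟨u⁻¹, by rw [smul_smul, Units.inv_mul, one_smul]⟩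

lemma ProjEq.trans {P Q T : Pt R} (h : ProjEq P Q) (h' : ProjEq Q T) : ProjEq P T := by
  obtain ⟨u, rfl⟩ := projEq_iff.1 h
  obtain ⟨v, rfl⟩ := projEq_iff.1 h'
  exact projEq_iff.2 ⟨v * u, by rw [smul_smul, Units.val_mul]⟩

lemma ProjEq.ne_zero {P Q : Pt R} (h : ProjEq P Q) (hQ : Q ≠ 0) : P ≠ 0 := by
  obtain ⟨u, rfl⟩ := projEq_iff.1 h
  rintro rfl
  exact hQ (smul_zero _)

lemma ProjEq.padd (A B : R) {P P' Q Q' : Pt R} (hP : ProjEq P P') (hQ : ProjEq Q Q') :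
    ProjEq (padd A B P Q) (padd A B P' Q') := by
  obtain ⟨u, rfl⟩ := projEq_iff.1 hP
  obtain ⟨v, rfl⟩ := projEq_iff.1 hQ
  exact projEq_iff.2 ⟨u ^ 2 * v ^ 2, by rw [padd_smul]; simp⟩

lemma ProjEq.refl (P : Pt R) : ProjEq P P := projEq_iff.2 ⟨1, by simp⟩

lemma ProjEq.pmul (A B : R) (n : ℕ) {P P' : Pt R} (hP : ProjEq P P') :
    ProjEq (pmul A B n P) (pmul A B n P') := by
  induction n with
  | zero => exact ProjEq.refl _
  | succ n ih => rw [pmul_succ, pmul_succ]; exact ih.padd A B hP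

lemma OnCurve.smul {A B : R} {P : Pt R} (h : OnCurve A B P) (c : R) : OnCurve A B (c • P) := by
  simp only [OnCurve, Prod.smul_fst, Prod.smul_snd, smul_eq_mul] at h ⊢
  linear_combination c ^ 3 * h

/-- The image of a coordinate triple under a ring homomorphism. -/
def ptMap (f : R →+* S) (P : Pt R) : Pt S := (f P.1, f P.2.1, f P.2.2)

lemma ptMap_padd (f : R →+* S) (A B : R) (P Q : Pt R) :
    ptMap f (padd A B P Q) = padd (f A) (f B) (ptMap f P) (ptMap f Q) := by
  simp [ptMap, padd, map_ofNat]

lemma ptMap_pmul (f : R →+* S) (A B : R) (n : ℕ) (P : Pt R) :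
    ptMap f (pmul A B n P) = pmul (f A) (f B) n (ptMap f P) := by
  induction n with
  | zero => simp [ptMap, pmul_zero]
  | succ n ih => rw [pmul_succ, pmul_succ, ptMap_padd, ih]

lemma ptMap_smul (f : R →+* S) (c : R) (P : Pt R) : ptMap f (c • P) = f c • ptMap f P := by
  simp [ptMap]

lemma ProjEq.ptMap (f : R →+* S) {P Q : Pt R} (h : ProjEq P Q) :
    ProjEq (ptMap f P) (ptMap f Q) := by
  obtain ⟨u, rfl⟩ := projEq_iff.1 h
  exact projEq_iff.2 ⟨Units.map (f : R →* S) u, ptMap_smul _ _ _⟩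

lemma OnCurve.ptMap (f : R →+* S) {A B : R} {P : Pt R} (h : OnCurve A B P) :
    OnCurve (f A) (f B) (ptMap f P) := by
  simpa [OnCurve, _root_.ptMap] using congrArg f h

lemma onCurve_of_ptMap {f : R →+* S} (hf : Function.Injective f) {A B : R} {P : Pt R}
    (h : OnCurve (f A) (f B) (ptMap f P)) : OnCurve A B P :=
  hf (by simpa [OnCurve, ptMap] using h)

/-- All the `2 × 2` minors of the two coordinate triples vanish. -/
def Proportional (P Q : Pt R) : Prop :=
  P.1 * Q.2.1 = P.2.1 * Q.1 ∧ P.1 * Q.2.2 = P.2.2 * Q.1 ∧ P.2.1 * Q.2.2 = P.2.2 * Q.2.1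

lemma Proportional.ptMap (f : R →+* S) {P Q : Pt R} (h : Proportional P Q) :
    Proportional (ptMap f P) (ptMap f Q) := by
  simpa only [Proportional, _root_.ptMap, map_mul] using
    And.intro (congrArg f h.1) (And.intro (congrArg f h.2.1) (congrArg f h.2.2))

lemma proportional_of_ptMap {f : R →+* S} (hf : Function.Injective f) {P Q : Pt R}
    (h : Proportional (ptMap f P) (ptMap f Q)) : Proportional P Q := by
  simp only [Proportional, ptMap, ← map_mul] at h
  exact ⟨hf h.1, hf h.2.1, hf h.2.2⟩

/-- `P'` is the translate of `P` by the infinitesimal multiple `k * e` of the invariant vector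
field, in the chart `Y = 1`. -/
def Shift (A B e k : R) (P P' : Pt R) : Prop :=
  ∃ (x z x' z' : R) (u u' : Rˣ), P = (u : R) • (x, 1, z) ∧ P' = (u' : R) • (x', 1, z') ∧
    x ^ 3 + A * x * z ^ 2 + B * z ^ 3 = z ∧
    x' = x + k * e * (1 - 2 * A * x * z - 3 * B * z ^ 2) ∧
    z' = z + k * e * (3 * x ^ 2 + A * z ^ 2)

lemma shift_equation {A B d x z : R} (hd : d ^ 2 = 0)
    (h : x ^ 3 + A * x * z ^ 2 + B * z ^ 3 = z) :
    (x + d * (1 - 2 * A * x * z - 3 * B * z ^ 2)) ^ 3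
      + A * (x + d * (1 - 2 * A * x * z - 3 * B * z ^ 2)) * (z + d * (3 * x ^ 2 + A * z ^ 2)) ^ 2
      + B * (z + d * (3 * x ^ 2 + A * z ^ 2)) ^ 3 = z + d * (3 * x ^ 2 + A * z ^ 2) := by
  generalize ha : 1 - 2 * A * x * z - 3 * B * z ^ 2 = a
  generalize hb : 3 * x ^ 2 + A * z ^ 2 = b
  linear_combination h + (3 * x * a ^ 2 + 2 * A * z * a * b + (A * x + 3 * B * z) * b ^ 2
    + d * (a ^ 3 + A * a * b ^ 2 + B * b ^ 3)) * hd - d * b * ha + d * a * hb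

lemma Shift.symm_equation {A B e k : R} (he : e ^ 2 = 0) {P P' : Pt R}
    (h : Shift A B e k P P') : ∃ (x z : R) (u : Rˣ), P' = (u : R) • (x, 1, z) ∧
      x ^ 3 + A * x * z ^ 2 + B * z ^ 3 = z := by
  obtain ⟨x, z, x', z', u, u', -, rfl, hE, rfl, rfl⟩ := h
  exact ⟨_, _, u', rfl, shift_equation (by rw [mul_pow, he, mul_zero]) hE⟩

lemma Shift.trans {A B e k l : R} (he : e ^ 2 = 0) {P P' P'' : Pt R}
    (h : Shift A B e k P P') (h' : Shift A B e l P' P'') : Shift A B e (k + l) P P'' := by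
  obtain ⟨x, z, x', z', u, u', rfl, rfl, hE, hx, hz⟩ := h
  obtain ⟨x₁, z₁, x'', z'', v, v', h₁, rfl, -, hx', hz'⟩ := h'
  simp only [Prod.smul_mk, smul_eq_mul, mul_one, Prod.mk.injEq] at h₁
  obtain ⟨h₁, h₂, h₃⟩ := h₁
  obtain rfl : u' = v := Units.ext h₂
  obtain rfl : x' = x₁ := (Units.mul_right_inj u').1 h₁
  obtain rfl : z' = z₁ := (Units.mul_right_inj u').1 h₃
  have ex : e * x' = e * x := by
    rw [hx]; linear_combination (k * (1 - 2 * A * x * z - 3 * B * z ^ 2)) * he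
  have ez : e * z' = e * z := by
    rw [hz]; linear_combination (k * (3 * x ^ 2 + A * z ^ 2)) * he
  refine ⟨x, z, x'', z'', u, v', rfl, rfl, hE, ?_, ?_⟩
  · rw [hx']
    linear_combination hx - 2 * l * A * z' * ex - 2 * l * A * x * ez
      - 3 * l * B * (z' + z) * ez
  · rw [hz']
    linear_combination hz + 3 * l * (x' + x) * ex + l * A * (z' + z) * ez

lemma padd_derivative_fst {A B x z u v : R} (h : x ^ 3 + A * x * z ^ 2 + B * z ^ 3 = z)
    (h' : u ^ 3 + A * u * v ^ 2 + B * v ^ 3 = v) {N L D : Pt R}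
    (hD : D = (1 - 2 * A * x * z - 3 * B * z ^ 2, 0, 3 * x ^ 2 + A * z ^ 2))
    (hN : N = padd A B (x, 1, z) (u, 1, v))
    (hL : L = padd A B ((x, 1, z) + D) (u, 1, v) - N - padd A B D (u, 1, v)) :
    L.1 * N.2.1 - N.1 * L.2.1 = N.2.1 ^ 2 - 2 * A * N.1 * N.2.2 - 3 * B * N.2.2 ^ 2 := by
  subst hL hN hD
  simp only [padd, Prod.fst_sub, Prod.snd_sub, Prod.mk_add_mk]
  linear_combination
    (-12 * A ^ 4 * x * z * v ^ 3 - 4 * A ^ 4 * x * v ^ 4 - 18 * A ^ 4 * z ^ 2 * u * v ^ 2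
      - 16 * A ^ 4 * z * u * v ^ 3 - 27 * A ^ 3 * B * z ^ 2 * v ^ 3
      - 18 * A ^ 3 * B * z * v ^ 4 - 6 * A ^ 3 * x ^ 2 * u * v ^ 2
      + 12 * A ^ 3 * x * z * u ^ 2 * v - 6 * A ^ 3 * x * u ^ 2 * v ^ 2
      - 6 * A ^ 3 * z ^ 2 * u ^ 3 - 2 * A ^ 3 * v ^ 3 + 9 * A ^ 2 * B * x ^ 2 * v ^ 3
      + 54 * A ^ 2 * B * x * z * u * v ^ 2 + 9 * A ^ 2 * B * x * u * v ^ 3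
      + 27 * A ^ 2 * B * z ^ 2 * u ^ 2 * v - 18 * A ^ 2 * x ^ 2 * u ^ 3
      - 18 * A ^ 2 * x * u ^ 4 + 6 * A ^ 2 * x * u * v - 6 * A ^ 2 * u ^ 2 * v
      - 54 * A * B ^ 2 * x * z * v ^ 3 - 27 * A * B ^ 2 * x * v ^ 4
      - 81 * A * B ^ 2 * z ^ 2 * u * v ^ 2 - 162 * A * B ^ 2 * z * u * v ^ 3
      - 81 * A * B * x ^ 2 * u ^ 2 * v - 54 * A * B * x * z * u ^ 3
      - 81 * A * B * x * u ^ 3 * v + 9 * A * B * x * v ^ 2 - 54 * A * B * z * u ^ 4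
      + 36 * A * B * z * u * v + 9 * A * B * u * v ^ 2 - 162 * B ^ 3 * z ^ 2 * v ^ 3
      - 162 * B ^ 3 * z * v ^ 4 - 162 * B ^ 2 * x ^ 2 * u * v ^ 2
      - 162 * B ^ 2 * x * z * u ^ 2 * v - 162 * B ^ 2 * x * u ^ 2 * v ^ 2
      - 81 * B ^ 2 * z ^ 2 * u ^ 3 - 162 * B ^ 2 * z * u ^ 3 * v + 54 * B ^ 2 * z * v ^ 2
      + 27 * B * u ^ 3 - 18 * B * v) * h
    + (-8 * A ^ 4 * x * z ^ 3 * v - 2 * A ^ 4 * z ^ 4 * u - 9 * A ^ 3 * B * z ^ 4 * v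
      + 6 * A ^ 3 * x ^ 2 * z ^ 2 * u - 4 * A ^ 3 * z ^ 3 - 6 * A ^ 3 * z ^ 2 * v
      + 27 * A ^ 2 * B * x ^ 2 * z ^ 2 * v + 54 * A ^ 2 * B * x * z ^ 3 * u
      - 12 * A ^ 2 * x ^ 2 * z - 6 * A ^ 2 * x ^ 2 * v - 18 * A ^ 2 * x * z * u
      + 27 * A * B ^ 2 * x * z ^ 3 * v + 27 * A * B ^ 2 * z ^ 4 * u - 36 * A * B * x * z ^ 2
      - 27 * A * B * x * z * v - 45 * A * B * z ^ 2 * u - 81 * B ^ 2 * x ^ 2 * z ^ 2 * u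
      - 54 * B ^ 2 * z ^ 3 - 108 * B ^ 2 * z ^ 2 * v + 27 * B * x ^ 2 * u + 18 * B * z) * h'

lemma padd_derivative_snd {A B x z u v : R} (h : x ^ 3 + A * x * z ^ 2 + B * z ^ 3 = z)
    (h' : u ^ 3 + A * u * v ^ 2 + B * v ^ 3 = v) {N L D : Pt R}
    (hD : D = (1 - 2 * A * x * z - 3 * B * z ^ 2, 0, 3 * x ^ 2 + A * z ^ 2))
    (hN : N = padd A B (x, 1, z) (u, 1, v))
    (hL : L = padd A B ((x, 1, z) + D) (u, 1, v) - N - padd A B D (u, 1, v)) :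
    L.2.2 * N.2.1 - N.2.2 * L.2.1 = 3 * N.1 ^ 2 + A * N.2.2 ^ 2 := by
  subst hL hN hD
  simp only [padd, Prod.fst_sub, Prod.snd_sub, Prod.mk_add_mk]
  linear_combination
    (6 * A ^ 4 * z ^ 2 * v ^ 3 + 4 * A ^ 4 * z * v ^ 4 - 6 * A ^ 3 * x ^ 2 * v ^ 3
      + 12 * A ^ 3 * x * z * u * v ^ 2 + 6 * A ^ 3 * x * u * v ^ 3
      - 6 * A ^ 3 * z ^ 2 * u ^ 2 * v + 24 * A ^ 3 * z * u ^ 2 * v ^ 2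
      - 18 * A ^ 2 * B * x * z * v ^ 3 - 27 * A ^ 2 * B * z ^ 2 * u * v ^ 2
      + 36 * A ^ 2 * B * z * u * v ^ 3 + 54 * A ^ 2 * x ^ 2 * u ^ 2 * v
      + 36 * A ^ 2 * x * z * u ^ 3 + 54 * A ^ 2 * x * u ^ 3 * v - 6 * A ^ 2 * x * v ^ 2
      + 36 * A ^ 2 * z * u ^ 4 - 24 * A ^ 2 * z * u * v - 6 * A ^ 2 * u * v ^ 2
      + 27 * A * B ^ 2 * z ^ 2 * v ^ 3 + 54 * A * B ^ 2 * z * v ^ 4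
      + 81 * A * B * x ^ 2 * u * v ^ 2 + 162 * A * B * x * z * u ^ 2 * v
      + 81 * A * B * x * u ^ 2 * v ^ 2 + 27 * A * B * z ^ 2 * u ^ 3
      + 108 * A * B * z * u ^ 3 * v - 36 * A * B * z * v ^ 2 - 9 * A * B * v ^ 3
      - 18 * A * u ^ 3 + 12 * A * v + 324 * B ^ 2 * x * z * u * v ^ 2
      + 81 * B ^ 2 * x * u * v ^ 3 + 81 * B ^ 2 * z ^ 2 * u ^ 2 * v
      + 162 * B ^ 2 * z * u ^ 2 * v ^ 2 - 81 * B * x ^ 2 * u ^ 3 - 81 * B * x * u ^ 4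
      + 27 * B * x * u * v - 27 * B * u ^ 2 * v) * h
    + (2 * A ^ 4 * z ^ 4 * v - 6 * A ^ 3 * x ^ 2 * z ^ 2 * v - 24 * A ^ 3 * x * z ^ 3 * u
      - 54 * A ^ 2 * B * x * z ^ 3 * v - 27 * A ^ 2 * B * z ^ 4 * u + 24 * A ^ 2 * x * z ^ 2
      + 18 * A ^ 2 * x * z * v + 30 * A ^ 2 * z ^ 2 * u - 27 * A * B ^ 2 * z ^ 4 * v
      + 81 * A * B * x ^ 2 * z ^ 2 * u + 18 * A * B * z ^ 3 + 45 * A * B * z ^ 2 * v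
      - 18 * A * x ^ 2 * u - 12 * A * z + 81 * B ^ 2 * x ^ 2 * z ^ 2 * v
      + 81 * B ^ 2 * x * z ^ 3 * u - 54 * B * x ^ 2 * z - 27 * B * x ^ 2 * v
      - 81 * B * x * z * u) * h'

lemma padd_add_smul (A B d : R) (hd : d ^ 2 = 0) (P D Q : Pt R) :
    padd A B (P + d • D) Q = padd A B P Q
      + d • (padd A B (P + D) Q - padd A B P Q - padd A B D Q) := by
  have h₁ := congrArg (· * (padd A B D Q).1) hd
  have h₂ := congrArg (· * (padd A B D Q).2.1) hd
  have h₃ := congrArg (· * (padd A B D Q).2.2) hd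
  refine Prod.ext ?_ (Prod.ext ?_ ?_) <;> simp only [padd, Prod.smul_fst, Prod.smul_snd,
    Prod.fst_add, Prod.snd_add, Prod.fst_sub, Prod.snd_sub, smul_eq_mul] at h₁ h₂ h₃ ⊢
  · linear_combination h₁
  · linear_combination h₂
  · linear_combination h₃

lemma exists_chart_of_isUnit {A B : R} {P : Pt R} (hP : OnCurve A B P) (hY : IsUnit P.2.1) :
    ∃ (x z : R) (u : Rˣ), P = (u : R) • (x, 1, z) ∧
      x ^ 3 + A * x * z ^ 2 + B * z ^ 3 = z := by
  obtain ⟨X, Y, Z⟩ := P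
  obtain ⟨u, rfl⟩ := hY
  refine ⟨↑u⁻¹ * X, ↑u⁻¹ * Z, u, by simp, ?_⟩
  have hu : (↑u⁻¹ : R) * u = 1 := u.inv_mul
  simp only [OnCurve] at hP
  linear_combination (-(↑u⁻¹ : R) ^ 3) * hP
    + (↑u⁻¹ : R) * Z * ((↑u⁻¹ : R) * u + 1) * hu

lemma Shift.padd_right {A B e k : R} (he : e ^ 2 = 0) {P P' Q : Pt R}
    (h : Shift A B e k P P') (hQ : ∃ (x z : R) (u : Rˣ), Q = (u : R) • (x, 1, z) ∧
      x ^ 3 + A * x * z ^ 2 + B * z ^ 3 = z)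
    (hPQ : OnCurve A B (padd A B P Q)) (hY : IsUnit (padd A B P Q).2.1) :
    Shift A B e k (padd A B P Q) (padd A B P' Q) := by
  obtain ⟨x, z, x', z', u, u', rfl, rfl, hE, rfl, rfl⟩ := h
  obtain ⟨s, t, w, rfl, hE'⟩ := hQ
  have hd : (k * e) ^ 2 = 0 := by rw [mul_pow, he, mul_zero]
  obtain ⟨D, hD⟩ : ∃ D : Pt R, D = (1 - 2 * A * x * z - 3 * B * z ^ 2, 0,
    3 * x ^ 2 + A * z ^ 2) := ⟨_, rfl⟩
  obtain ⟨N, hN⟩ : ∃ N, N = padd A B (x, 1, z) (s, 1, t) := ⟨_, rfl⟩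
  obtain ⟨L, hL⟩ : ∃ L, L = padd A B ((x, 1, z) + D) (s, 1, t) - N - padd A B D (s, 1, t) :=
    ⟨_, rfl⟩
  have hX := padd_derivative_fst hE hE' hD hN hL
  have hZ := padd_derivative_snd hE hE' hD hN hL
  have hP' : ((x + k * e * (1 - 2 * A * x * z - 3 * B * z ^ 2), 1,
      z + k * e * (3 * x ^ 2 + A * z ^ 2)) : Pt R) = (x, 1, z) + (k * e) • D := by
    simp [hD]
  rw [padd_smul, ← hN] at hPQ hY ⊢
  rw [padd_smul, hP', padd_add_smul A B _ hd, ← hN, ← hL]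
  have hc : ((u : R) ^ 2 * (w : R) ^ 2) = ((u ^ 2 * w ^ 2 : Rˣ) : R) := by simp
  have hc' : ((u' : R) ^ 2 * (w : R) ^ 2) = ((u' ^ 2 * w ^ 2 : Rˣ) : R) := by simp
  rw [hc] at hPQ hY ⊢
  rw [hc']
  have hNY : IsUnit N.2.1 := by simpa using hY
  have hNc : OnCurve A B N := by
    have := hPQ.smul (↑(u ^ 2 * w ^ 2 : Rˣ)⁻¹ : R)
    rwa [smul_smul, Units.inv_mul, one_smul] at this
  obtain ⟨a, b, n, rfl, hab⟩ := exists_chart_of_isUnit hNc hNY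
  clear hN hL hP' hc hc' hPQ hY hNY hNc hD
  obtain ⟨L₁, L₂, L₃⟩ := L
  simp only [Prod.smul_fst, Prod.smul_snd, smul_eq_mul, mul_one] at hX hZ
  have hn : (n : R) * (↑n⁻¹ : R) = 1 := n.mul_inv
  generalize hi : (↑n⁻¹ : R) = i at hn
  have hu : ((n : R) + k * e * L₂) * (i - k * e * L₂ * i ^ 2) = 1 := by
    linear_combination (1 - k * e * L₂ * i) * hn - L₂ ^ 2 * i ^ 2 * hd
  obtain ⟨m, hm⟩ : ∃ m : Rˣ, (m : R) = n + k * e * L₂ :=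
    ⟨⟨_, _, hu, by rw [mul_comm]; exact hu⟩, rfl⟩
  refine ⟨a, b, a + k * e * (1 - 2 * A * a * b - 3 * B * b ^ 2),
    b + k * e * (3 * a ^ 2 + A * b ^ 2), (u ^ 2 * w ^ 2) * n, (u' ^ 2 * w ^ 2) * m, ?_, ?_, hab,
    rfl, rfl⟩
  · simp only [Units.val_mul, mul_smul]
  · simp only [Units.val_mul, mul_smul, hm]
    congr 2
    simp only [Prod.smul_mk, Prod.mk_add_mk, smul_eq_mul, mul_one, Prod.mk.injEq]
    refine ⟨?_, by ring, ?_⟩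
    · linear_combination (k * e * i) * hX
        + (-k * e * L₁ + k * e * a * L₂ + k * e * n * (1 - 2 * A * a * b - 3 * B * b ^ 2)) * hn
        - L₂ * (1 - 2 * A * a * b - 3 * B * b ^ 2) * hd
    · linear_combination (k * e * i) * hZ
        + (-k * e * L₃ + k * e * b * L₂ + k * e * n * (3 * a ^ 2 + A * b ^ 2)) * hn
        - L₂ * (3 * a ^ 2 + A * b ^ 2) * hd

lemma Shift.padd {A B e k l : R} (he : e ^ 2 = 0) {P P' Q Q' : Pt R}
    (h : Shift A B e k P P') (h' : Shift A B e l Q Q')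
    (hPQ : OnCurve A B (padd A B P Q)) (hY : IsUnit (padd A B P Q).2.1) :
    Shift A B e (k + l) (padd A B P Q) (padd A B P' Q') := by
  have hQ : ∃ (x z : R) (u : Rˣ), Q = (u : R) • (x, 1, z) ∧
      x ^ 3 + A * x * z ^ 2 + B * z ^ 3 = z := by
    obtain ⟨x, z, -, -, u, -, hQ, -, hE, -⟩ := h'
    exact ⟨x, z, u, hQ, hE⟩
  have h₁ := h.padd_right he hQ hPQ hY
  refine h₁.trans he ?_
  obtain ⟨x, z, u, hu, hE⟩ := h₁.symm_equation he
  rw [padd_comm A B P' Q, padd_comm A B P' Q']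
  rw [padd_comm A B P' Q] at hu
  refine h'.padd_right he (h.symm_equation he) ?_ ?_
  · rw [hu]
    refine OnCurve.smul ?_ _
    simp only [OnCurve]
    linear_combination -hE
  · rw [hu]; simp

lemma Shift.pmul {A B e k : R} (he : e ^ 2 = 0) {P P' : Pt R} (h : Shift A B e k P P') {n : ℕ}
    (hc : ∀ m ≤ n, OnCurve A B (pmul A B m P)) (hY : ∀ m ≤ n, IsUnit (pmul A B m P).2.1) :
    Shift A B e (n * k) (pmul A B n P) (pmul A B n P') := by
  induction n with
  | zero => exact ⟨0, 0, 0, 0, 1, 1, by simp [pmul_zero], by simp [pmul_zero], by simp, by simp,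
      by simp⟩
  | succ n ih =>
    have hc' := hc (n + 1) le_rfl
    have hY' := hY (n + 1) le_rfl
    rw [pmul_succ] at hc' hY' ⊢
    rw [pmul_succ, Nat.cast_succ, add_mul, one_mul]
    exact (ih (fun m hm => hc m (hm.trans n.le_succ)) fun m hm => hY m (hm.trans n.le_succ)).padd
      he h hc' hY'

lemma Shift.projEq {A B e : R} {P P' : Pt R} (h : Shift A B e 0 P P') : ProjEq P P' := by
  obtain ⟨x, z, x', z', u, u', rfl, rfl, -, hx, hz⟩ := h
  obtain rfl : x' = x := by simpa using hx
  obtain rfl : z' = z := by simpa using hz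
  exact projEq_iff.2 ⟨u' * u⁻¹, by simp [mul_assoc]⟩

/-- Two affine points on the curve that agree modulo `e` differ by a shift. -/
lemma shift_of_affine {A B e k x y x' y' : R} (he : e ^ 2 = 0) (hy : IsUnit y)
    (h : y ^ 2 = x ^ 3 + A * x + B) (hx : x' = x - 2 * k * e * y)
    (hy' : y' = y - k * e * (3 * x ^ 2 + A)) :
    Shift A B e k (x, y, 1) (x', y', 1) := by
  obtain ⟨u, rfl⟩ := hy
  have hd : (k * e) ^ 2 = 0 := by rw [mul_pow, he, mul_zero]
  have hn : (u : R) * (↑u⁻¹ : R) = 1 := u.mul_inv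
  generalize hi : (↑u⁻¹ : R) = i at hn
  have hu : y' * (i + k * e * (3 * x ^ 2 + A) * i ^ 2) = 1 := by
    rw [hy']
    linear_combination (1 + k * e * (3 * x ^ 2 + A) * i) * hn - (3 * x ^ 2 + A) ^ 2 * i ^ 2 * hd
  obtain ⟨m, hm⟩ : ∃ m : Rˣ, (m : R) = y' := ⟨⟨_, _, hu, by rw [mul_comm]; exact hu⟩, rfl⟩
  refine ⟨i * x, i, _, _, u, m, ?_, ?_, ?_, rfl, rfl⟩
  · simp [← hi]
  · simp only [Prod.smul_mk, smul_eq_mul, mul_one, Prod.mk.injEq, hm, true_and]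
    refine ⟨?_, ?_⟩
    · rw [hx, hy']
      linear_combination (-x + k * e * i * (2 * A * x + 3 * B) + 3 * k * e * u) * hn
        + (3 * x ^ 2 + A) * (1 - 2 * A * x * i ^ 2 - 3 * B * i ^ 2) * hd - 3 * k * e * i * h
    · linear_combination -hu
  · linear_combination (-i ^ 3) * h + i * (u * i + 1) * hn

end CommRing

section Field

variable {F : Type*} [Field F]

/-- The Weierstrass curve `y² = x³ + Ax + B`. -/
abbrev shortCurve (A B : F) : WeierstrassCurve.Affine F := ⟨0, 0, 0, A, B⟩

/-- The triple `T` is a system of projective coordinates of the point `P`. -/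
def Represents (A B : F) (T : Pt F) : (shortCurve A B).Point → Prop
  | .zero => ∃ c : F, c ≠ 0 ∧ T = c • (0, 1, 0)
  | .some x y _ => ∃ c : F, c ≠ 0 ∧ T = c • (x, y, 1)

lemma represents_zero {A B : F} {T : Pt F} :
    Represents A B T 0 ↔ ∃ c : F, c ≠ 0 ∧ T = c • (0, 1, 0) := Iff.rfl

lemma represents_some {A B : F} {T : Pt F} {x y : F} {h : (shortCurve A B).Nonsingular x y} :
    Represents A B T (.some x y h) ↔ ∃ c : F, c ≠ 0 ∧ T = c • (x, y, 1) := Iff.rfl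

lemma Represents.exists_smul {A B : F} {T T' : Pt F} {P : (shortCurve A B).Point}
    (h : Represents A B T P) (h' : Represents A B T' P) : ∃ c : F, T' = c • T := by
  cases P <;> obtain ⟨c, hc, rfl⟩ := h <;> obtain ⟨d, hd, rfl⟩ := h' <;>
    exact ⟨d * c⁻¹, by rw [smul_smul, mul_assoc, inv_mul_cancel₀ hc, mul_one]⟩

lemma Represents.proportional {A B : F} {T T' : Pt F} {P : (shortCurve A B).Point}
    (h : Represents A B T P) (h' : Represents A B T' P) : Proportional T T' := by
  obtain ⟨c, rfl⟩ := h.exists_smul h'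
  simp only [Proportional, Prod.smul_fst, Prod.smul_snd, smul_eq_mul]
  refine ⟨?_, ?_, ?_⟩ <;> ring

lemma equation_of_nonsingular {A B x y : F} (h : (shortCurve A B).Nonsingular x y) :
    y ^ 2 = x ^ 3 + A * x + B := by
  have := ((shortCurve A B).equation_iff x y).1 h.1
  linear_combination this

lemma nonsingular_of_equation {A B x y : F} (hD : 4 * A ^ 3 + 27 * B ^ 2 ≠ 0) (h2 : (2 : F) ≠ 0)
    (h : y ^ 2 = x ^ 3 + A * x + B) : (shortCurve A B).Nonsingular x y := by
  refine ((shortCurve A B).equation_iff_nonsingular_of_Δ_ne_zero ?_).1 ?_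
  · have : (shortCurve A B).Δ = -2 ^ 4 * (4 * A ^ 3 + 27 * B ^ 2) := by
      simp only [WeierstrassCurve.Δ, WeierstrassCurve.b₂, WeierstrassCurve.b₄,
        WeierstrassCurve.b₆, WeierstrassCurve.b₈]
      ring
    rw [this]
    exact mul_ne_zero (neg_ne_zero.2 (pow_ne_zero _ h2)) hD
  · rw [WeierstrassCurve.Affine.equation_iff]
    linear_combination h

lemma Represents.onCurve {A B : F} {T : Pt F} {P : (shortCurve A B).Point}
    (h : Represents A B T P) : OnCurve A B T := by
  cases P with
  | zero =>
    obtain ⟨c, -, rfl⟩ := h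
    exact OnCurve.smul (by simp [OnCurve]) c
  | some x y hP =>
    obtain ⟨c, -, rfl⟩ := h
    refine OnCurve.smul ?_ c
    have := equation_of_nonsingular hP
    simp only [OnCurve]
    linear_combination this

lemma padd_chord {A B x y u v : F} (h : y ^ 2 = x ^ 3 + A * x + B)
    (h' : v ^ 2 = u ^ 3 + A * u + B) (hx : x ≠ u) {T : Pt F}
    (hT : T = padd A B (x, y, 1) (u, v, 1)) {ℓ : F} (hℓ : ℓ = (y - v) / (x - u)) :
    T.1 = (ℓ ^ 2 - x - u) * T.2.2 ∧ T.2.1 = -(ℓ * ((ℓ ^ 2 - x - u) - x) + y) * T.2.2 := by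
  have hxu : x - u ≠ 0 := sub_ne_zero.2 hx
  have hℓ' : ℓ * (x - u) = y - v := by rw [hℓ, div_mul_cancel₀ _ hxu]
  have h₁ : T.1 * (x - u) ^ 2 = ((y - v) ^ 2 - (x + u) * (x - u) ^ 2) * T.2.2 := by
    subst hT
    simp only [padd]
    linear_combination (3 * x ^ 3 * v + 3 * x ^ 2 * y * u - 6 * x ^ 2 * u * v - 6 * x * y * u ^ 2
      + 3 * x * u ^ 2 * v + 3 * y ^ 3 - 3 * y ^ 2 * v + 3 * y * u ^ 3 - 3 * y * v ^ 2
      + 3 * v ^ 3) * h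
      + (A * x * y + A * x * v - A * y * u - A * u * v + 3 * x ^ 3 * v + 3 * x ^ 2 * y * u
      - 3 * x ^ 2 * u * v - 3 * x * y * u ^ 2 + 3 * y ^ 3 - 2 * y ^ 2 * v - y * v ^ 2) * (h' - h)
  have h₂ : T.2.1 * (x - u) = -((y - v) * (T.1 - x * T.2.2) + y * (x - u) * T.2.2) := by
    subst hT
    simp only [padd]
    linear_combination (-6 * A * x ^ 2 + 9 * A * x * u - 3 * A * u ^ 2 + 9 * B * x - 9 * B * u - 9 * x ^ 4
      + 12 * x * y ^ 2 + 9 * x * u ^ 3 - 9 * x * v ^ 2 - 3 * u * v ^ 2) * h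
      + (-A ^ 2 - 6 * A * x ^ 2 - 9 * x ^ 4 + 12 * x * y ^ 2) * (h' - h)
  have h₃ : T.1 = (ℓ ^ 2 - x - u) * T.2.2 := by
    refine mul_right_cancel₀ (pow_ne_zero 2 hxu) ?_
    rw [h₁, ← hℓ']
    ring
  refine ⟨h₃, mul_right_cancel₀ hxu ?_⟩
  rw [h₂, h₃, ← hℓ']
  ring

lemma padd_tangent {A B x y : F} (h : y ^ 2 = x ^ 3 + A * x + B) (hy : 2 * y ≠ 0) {T : Pt F}
    (hT : T = padd A B (x, y, 1) (x, y, 1)) {ℓ : F} (hℓ : ℓ = (3 * x ^ 2 + A) / (2 * y)) :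
    T.1 = (ℓ ^ 2 - x - x) * T.2.2 ∧ T.2.1 = -(ℓ * ((ℓ ^ 2 - x - x) - x) + y) * T.2.2 := by
  have hℓ' : ℓ * (2 * y) = 3 * x ^ 2 + A := by rw [hℓ, div_mul_cancel₀ _ hy]
  have h₁ : T.1 * (2 * y) ^ 2 = ((3 * x ^ 2 + A) ^ 2 - 8 * x * y ^ 2) * T.2.2 := by
    subst hT
    simp only [padd]
    linear_combination (6 * A ^ 2 * y + 36 * A * x ^ 2 * y + 54 * x ^ 4 * y + 24 * x * y ^ 3) * h
  have h₂ : T.2.1 * (2 * y) = -((3 * x ^ 2 + A) * (T.1 - x * T.2.2) + 2 * y * y * T.2.2) := by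
    subst hT
    simp only [padd]
    linear_combination (18 * A * x * y + 18 * B * y + 18 * x ^ 3 * y + 6 * y ^ 3) * h
  have h₃ : T.1 = (ℓ ^ 2 - x - x) * T.2.2 := by
    refine mul_right_cancel₀ (pow_ne_zero 2 hy) ?_
    rw [h₁, ← hℓ']
    ring
  refine ⟨h₃, mul_right_cancel₀ hy ?_⟩
  rw [h₂, h₃, ← hℓ']
  ring

lemma exists_eq_smul_affine {T : Pt F} (h0 : T ≠ 0) {x y : F} (hx : T.1 = x * T.2.2)
    (hy : T.2.1 = y * T.2.2) : ∃ c : F, c ≠ 0 ∧ T = c • (x, y, 1) := by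
  obtain ⟨X, Y, Z⟩ := T
  simp only at hx hy
  subst hx hy
  refine ⟨Z, ?_, by simp [mul_comm]⟩
  rintro rfl
  simp at h0

lemma represents_padd_some {A B x y u v : F} (h : (shortCurve A B).Nonsingular x y)
    (h' : (shortCurve A B).Nonsingular u v) (h0 : padd A B (x, y, 1) (u, v, 1) ≠ 0) :
    Represents A B (padd A B (x, y, 1) (u, v, 1))
      (WeierstrassCurve.Affine.Point.some x y h + WeierstrassCurve.Affine.Point.some u v h') := by
  have hE := equation_of_nonsingular h
  have hE' := equation_of_nonsingular h'
  have hneg : ∀ a b : F, (shortCurve A B).negY a b = -b := by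
    simp [WeierstrassCurve.Affine.negY]
  by_cases hxy : x = u ∧ y = (shortCurve A B).negY u v
  · rw [WeierstrassCurve.Affine.Point.add_of_Y_eq hxy.1 hxy.2, represents_zero]
    obtain ⟨rfl, hy⟩ := hxy
    rw [hneg] at hy
    subst hy
    refine ⟨_, ?_, Prod.ext ?_ (Prod.ext (mul_one _).symm ?_)⟩
    · intro hY
      refine h0 (Prod.ext ?_ (Prod.ext hY ?_)) <;> simp only [padd, Prod.fst_zero, Prod.snd_zero]
        <;> ring
    all_goals simp only [padd, Prod.smul_fst, Prod.smul_snd, smul_eq_mul]; ring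
  · rw [WeierstrassCurve.Affine.Point.add_some hxy, represents_some]
    have key : ∀ ℓ, (shortCurve A B).slope x u y v = ℓ →
        ((padd A B (x, y, 1) (u, v, 1)).1
            = (ℓ ^ 2 - x - u) * (padd A B (x, y, 1) (u, v, 1)).2.2 ∧
          (padd A B (x, y, 1) (u, v, 1)).2.1 = -(ℓ * ((ℓ ^ 2 - x - u) - x) + y) *
            (padd A B (x, y, 1) (u, v, 1)).2.2) := by
      rintro ℓ rfl
      by_cases hx : x = u
      · subst hx
        have hy : y ≠ -v := fun hy => hxy ⟨rfl, by rw [hneg, hy]⟩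
        have hyv : y = v := by
          have : (y - v) * (y + v) = 0 := by linear_combination hE - hE'
          rcases mul_eq_zero.1 this with h | h
          · exact sub_eq_zero.1 h
          · exact absurd (eq_neg_of_add_eq_zero_left h) hy
        subst hyv
        refine padd_tangent hE (fun h => hy ?_) rfl ?_
        · linear_combination h
        · rw [WeierstrassCurve.Affine.slope_of_Y_ne rfl (by rwa [hneg]), hneg]
          simp only [mul_zero, zero_mul, add_zero, sub_zero]
          congr 1
          ring
      · exact padd_chord hE hE' hx rfl (WeierstrassCurve.Affine.slope_of_X_ne hx)
    obtain ⟨h₁, h₂⟩ := key _ rfl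
    refine exists_eq_smul_affine h0 ?_ ?_
    · rw [h₁]; simp [WeierstrassCurve.Affine.addX]
    · rw [h₂]
      simp [WeierstrassCurve.Affine.addX, WeierstrassCurve.Affine.addY,
        WeierstrassCurve.Affine.negAddY, WeierstrassCurve.Affine.negY]

lemma Represents.padd {A B : F} {T T' : Pt F} {P P' : (shortCurve A B).Point}
    (h : Represents A B T P) (h' : Represents A B T' P') (h0 : _root_.padd A B T T' ≠ 0) :
    Represents A B (_root_.padd A B T T') (P + P') := by
  have smul : ∀ {c : F} {T : Pt F} {P : (shortCurve A B).Point}, c ≠ 0 →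
      Represents A B T P → Represents A B (c • T) P := by
    rintro c T (_ | _) hc ⟨d, hd, rfl⟩ <;>
      exact ⟨c * d, mul_ne_zero hc hd, smul_smul _ _ _⟩
  have infinity : ∀ {T : Pt F} {P : (shortCurve A B).Point}, Represents A B T P →
      _root_.padd A B (0, 1, 0) T ≠ 0 → Represents A B (_root_.padd A B (0, 1, 0) T) P := by
    intro T P hT h0
    rw [padd_infinity_left] at h0 ⊢
    exact smul (left_ne_zero_of_smul h0) hT
  rcases P with _ | ⟨x, y, hP⟩
  · obtain ⟨c, hc, rfl⟩ := h
    have hs := padd_smul A B c 1 (0, 1, 0) T'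
    rw [one_smul, one_pow, mul_one] at hs
    rw [hs] at h0 ⊢
    have : (WeierstrassCurve.Affine.Point.zero : (shortCurve A B).Point) + P' = P' := zero_add P'
    rw [this]
    exact smul (pow_ne_zero 2 hc) (infinity h' (right_ne_zero_of_smul h0))
  rcases P' with _ | ⟨u, v, hP'⟩
  · obtain ⟨c, hc, rfl⟩ := h'
    have hs := padd_smul A B c 1 (0, 1, 0) T
    rw [one_smul, one_pow, mul_one] at hs
    rw [padd_comm, hs] at h0 ⊢
    have : WeierstrassCurve.Affine.Point.some x y hP +
      (WeierstrassCurve.Affine.Point.zero : (shortCurve A B).Point) = .some x y hP := add_zero _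
    rw [this]
    exact smul (pow_ne_zero 2 hc) (infinity h (right_ne_zero_of_smul h0))
  · obtain ⟨c, hc, rfl⟩ := h
    obtain ⟨d, hd, rfl⟩ := h'
    rw [padd_smul] at h0 ⊢
    exact smul (mul_ne_zero (pow_ne_zero 2 hc) (pow_ne_zero 2 hd))
      (represents_padd_some hP hP' (right_ne_zero_of_smul h0))

lemma Represents.pmul {A B : F} {T : Pt F} {P : (shortCurve A B).Point}
    (h : Represents A B T P) {n : ℕ} (h0 : _root_.pmul A B n T ≠ 0) :
    Represents A B (_root_.pmul A B n T) (n • P) := by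
  induction n with
  | zero =>
    rw [zero_smul, represents_zero]
    exact ⟨1, one_ne_zero, by rw [one_smul, pmul_zero]⟩
  | succ n ih =>
    have := ih (pmul_ne_zero_of_le n.le_succ h0)
    rw [pmul_succ] at h0 ⊢
    rw [succ_nsmul]
    exact this.padd h h0

lemma proportional_pmul_pmul {A B : F} {T : Pt F} {P : (shortCurve A B).Point}
    (hP : Represents A B T P) {m n : ℕ} (hm : pmul A B m T ≠ 0) (hn : pmul A B n T ≠ 0)
    (hmn : pmul A B m (pmul A B n T) ≠ 0) (hnm : pmul A B n (pmul A B m T) ≠ 0) :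
    Proportional (pmul A B m (pmul A B n T)) (pmul A B n (pmul A B m T)) := by
  have h := (hP.pmul hm).pmul hnm
  rw [← mul_nsmul, mul_comm, mul_nsmul] at h
  exact ((hP.pmul hn).pmul hmn).proportional h

/-- No multiple of a point of odd order has vanishing `Y`-coordinate. -/
lemma Represents.pmul_Y_ne_zero {A B : F} {T : Pt F} {P : (shortCurve A B).Point}
    (h : Represents A B T P) {p : ℕ} (hp : Odd p) (hT : ProjEq (_root_.pmul A B p T) (0, 1, 0))
    {m : ℕ} (hm : m ≤ p) : (_root_.pmul A B m T).2.1 ≠ 0 := by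
  intro hY
  have h0 : _root_.pmul A B p T ≠ 0 := hT.ne_zero (by simp)
  have hpP : p • P = 0 := by
    have hr := h.pmul h0
    generalize p • P = Q at hr
    rcases Q with _ | ⟨x, y, hQ⟩
    · rfl
    · obtain ⟨c, hc, hc'⟩ := hr
      obtain ⟨u, hu⟩ := projEq_iff.1 hT
      rw [hc'] at hu
      have := congrArg (fun P : Pt F => P.2.2) hu
      simp [hc] at this
  have hr := h.pmul (pmul_ne_zero_of_le hm h0)
  have h2 : m • P + m • P = 0 := by
    generalize m • P = Q at hr
    rcases Q with _ | ⟨x, y, hQ⟩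
    · exact add_zero _
    · obtain ⟨c, hc, hc'⟩ := hr
      rw [hc'] at hY
      have hy : y = 0 := by simpa [hc] using hY
      exact WeierstrassCurve.Affine.Point.add_self_of_Y_eq
        (by simp [hy, WeierstrassCurve.Affine.negY])
  have h1 : m • P = 0 := by
    obtain ⟨k, rfl⟩ := hp
    have : (2 * k + 1) • (m • P) = m • P := by
      rw [add_smul, mul_comm, mul_smul, two_smul, h2, smul_zero, zero_add, one_smul]
    rw [← this, smul_comm, hpP, smul_zero]
  rw [h1] at hr
  obtain ⟨c, hc, hc'⟩ := hr
  rw [hc'] at hY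
  simp [hc] at hY

end Field

section DualNumber

open Polynomial

variable {K : Type*} [Field K]

/-- Reduction `K[ε] → K` modulo `ε`. -/
abbrev dualFst (K : Type*) [Field K] : DualNumber K →+* K :=
  (TrivSqZeroExt.fstHom K K K : DualNumber K →+* K)

/-- Evaluation `K[X] → K[ε]` at `ε`. -/
abbrev evalEps (K : Type*) [Field K] : K[X] →+* DualNumber K :=
  (aeval (εD K) : K[X] →ₐ[K] DualNumber K)

lemma dual_isUnit_iff {d : DualNumber K} : IsUnit d ↔ dualFst K d ≠ 0 := by
  rw [TrivSqZeroExt.isUnit_iff_isUnit_fst, isUnit_iff_ne_zero]; rfl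

lemma eps_sq : (εD K) ^ 2 = 0 := by rw [sq, DualNumber.eps_mul_eps]

lemma dual_eq_of_fst_eq_zero {d : DualNumber K} (h : dualFst K d = 0) :
    d = ιD d.snd * εD K := by
  have h : d.fst = 0 := h
  ext <;> simp [h]

lemma dual_mul_eq_zero {c d : DualNumber K} (h : dualFst K c = 0) (h' : dualFst K d = 0) :
    c * d = 0 := by
  rw [dual_eq_of_fst_eq_zero h, dual_eq_of_fst_eq_zero h', mul_mul_mul_comm,
    DualNumber.eps_mul_eps, mul_zero]

lemma evalEps_surjective : Function.Surjective (evalEps K) := by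
  intro d
  refine ⟨C d.fst + C d.snd * X, ?_⟩
  ext <;> simp [TrivSqZeroExt.algebraMap_eq_inl]

lemma Proportional.projEq {T T' : Pt (DualNumber K)} (h : Proportional T T')
    (hT : _root_.ptMap (dualFst K) T ≠ 0) (hT' : _root_.ptMap (dualFst K) T' ≠ 0) : ProjEq T T' := by
  suffices ∃ c : DualNumber K, T' = c • T by
    obtain ⟨c, rfl⟩ := this
    have hc : IsUnit c := by
      rw [dual_isUnit_iff]
      intro h0
      rw [_root_.ptMap_smul, h0, zero_smul] at hT'
      exact hT' rfl
    exact projEq_iff.2 ⟨hc.unit, rfl⟩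
  obtain ⟨X, Y, Z⟩ := T
  obtain ⟨X', Y', Z'⟩ := T'
  obtain ⟨h₁, h₂, h₃⟩ := h
  simp only at h₁ h₂ h₃
  by_cases hX : IsUnit X
  · obtain ⟨u, rfl⟩ := hX
    have hu := u.mul_inv
    refine ⟨X' * ↑u⁻¹, Prod.ext ?_ (Prod.ext ?_ ?_)⟩ <;>
      simp only [Prod.smul_fst, Prod.smul_snd, smul_eq_mul]
    · linear_combination -X' * hu
    · linear_combination ↑u⁻¹ * h₁ - Y' * hu
    · linear_combination ↑u⁻¹ * h₂ - Z' * hu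
  by_cases hY : IsUnit Y
  · obtain ⟨u, rfl⟩ := hY
    have hu := u.mul_inv
    refine ⟨Y' * ↑u⁻¹, Prod.ext ?_ (Prod.ext ?_ ?_)⟩ <;>
      simp only [Prod.smul_fst, Prod.smul_snd, smul_eq_mul]
    · linear_combination -↑u⁻¹ * h₁ - X' * hu
    · linear_combination -Y' * hu
    · linear_combination ↑u⁻¹ * h₃ - Z' * hu
  by_cases hZ : IsUnit Z
  · obtain ⟨u, rfl⟩ := hZ
    have hu := u.mul_inv
    refine ⟨Z' * ↑u⁻¹, Prod.ext ?_ (Prod.ext ?_ ?_)⟩ <;>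
      simp only [Prod.smul_fst, Prod.smul_snd, smul_eq_mul]
    · linear_combination -↑u⁻¹ * h₂ - X' * hu
    · linear_combination -↑u⁻¹ * h₃ - Y' * hu
    · linear_combination -Z' * hu
  rw [dual_isUnit_iff, not_not] at hX hY hZ
  exact absurd (by rw [_root_.ptMap, hX, hY, hZ]; rfl) hT

/-- A curve over `K[ε]` with a point on it lifts to a curve over `K[X]` with a point on it, whose
multiples are represented by multiples of a point in the Mordell–Weil group over `K(X)`. -/
lemma exists_generic_lift (h2 : (2 : K) ≠ 0) {A B x y : DualNumber K}
    (hD : 4 * dualFst K A ^ 3 + 27 * dualFst K B ^ 2 ≠ 0) (h : OnCurve A B (x, y, 1)) :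
    ∃ (A' B' : K[X]) (T : Pt K[X])
      (P : (shortCurve (algebraMap K[X] (FractionRing K[X]) A')
        (algebraMap K[X] (FractionRing K[X]) B')).Point),
      evalEps K A' = A ∧ evalEps K B' = B ∧ ptMap (evalEps K) T = (x, y, 1) ∧
      Represents _ _ (ptMap (algebraMap K[X] (FractionRing K[X])) T) P := by
  obtain ⟨A', rfl⟩ := evalEps_surjective A
  obtain ⟨x', rfl⟩ := evalEps_surjective x
  obtain ⟨y', rfl⟩ := evalEps_surjective y
  have hinj : Function.Injective (algebraMap K[X] (FractionRing K[X])) :=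
    IsFractionRing.injective _ _
  have hB : evalEps K (y' ^ 2 - x' ^ 3 - A' * x') = B := by
    simp only [OnCurve] at h
    rw [map_sub, map_sub, map_mul, map_pow, map_pow]
    linear_combination h
  have hN : (shortCurve (algebraMap K[X] (FractionRing K[X]) A')
      (algebraMap K[X] (FractionRing K[X]) (y' ^ 2 - x' ^ 3 - A' * x'))).Nonsingular
      (algebraMap _ _ x') (algebraMap _ _ y') := by
    refine nonsingular_of_equation ?_ ?_ ?_
    · intro h0
      have h1 : 4 * A' ^ 3 + 27 * (y' ^ 2 - x' ^ 3 - A' * x') ^ 2 = 0 := hinj (by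
        rw [map_zero, ← h0, map_add, map_mul, map_mul, map_pow, map_pow, map_ofNat, map_ofNat])
      have h3 := congrArg (dualFst K) (congrArg (evalEps K) h1)
      rw [map_add, map_mul, map_mul, map_pow, map_pow, hB, map_ofNat, map_ofNat, map_zero,
        map_add, map_mul, map_mul, map_pow, map_pow, map_ofNat, map_ofNat, map_zero] at h3
      exact hD h3
    · intro h0
      have h1 : (2 : K[X]) = 0 := hinj (by rw [map_ofNat, map_zero, h0])
      have h3 := congrArg (dualFst K) (congrArg (evalEps K) h1)
      rw [map_ofNat, map_ofNat, map_zero, map_zero] at h3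
      exact h2 h3
    · simp only [map_sub, map_mul, map_pow]
      ring
  refine ⟨A', _, (x', y', 1), .some _ _ hN, rfl, hB, by simp [ptMap], 1, one_ne_zero, ?_⟩
  simp [ptMap]

lemma ptMap_algebraMap_ne_zero {T : Pt K[X]} (h : ptMap (dualFst K) (ptMap (evalEps K) T) ≠ 0) :
    ptMap (algebraMap K[X] (FractionRing K[X])) T ≠ 0 := by
  intro h0
  have hinj : Function.Injective (algebraMap K[X] (FractionRing K[X])) :=
    IsFractionRing.injective _ _
  simp only [ptMap, Prod.mk_eq_zero, map_eq_zero_iff _ hinj] at h0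
  obtain ⟨X, Y, Z⟩ := T
  obtain ⟨rfl, rfl, rfl⟩ := h0
  simp [ptMap] at h

lemma onCurve_pmul (h2 : (2 : K) ≠ 0) {A B x y : DualNumber K}
    (hD : 4 * dualFst K A ^ 3 + 27 * dualFst K B ^ 2 ≠ 0) (h : OnCurve A B (x, y, 1)) {m : ℕ}
    (hm : ptMap (dualFst K) (pmul A B m (x, y, 1)) ≠ 0) : OnCurve A B (pmul A B m (x, y, 1)) := by
  obtain ⟨A', B', T, P, rfl, rfl, hT, hP⟩ := exists_generic_lift h2 hD h
  rw [← hT, ← ptMap_pmul] at hm ⊢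
  have h0 := ptMap_algebraMap_ne_zero hm
  rw [ptMap_pmul] at h0
  have := (hP.pmul h0).onCurve
  rw [← ptMap_pmul] at this
  exact (onCurve_of_ptMap (IsFractionRing.injective _ _) this).ptMap _

lemma pmul_pmul_comm (h2 : (2 : K) ≠ 0) {A B x y : DualNumber K}
    (hD : 4 * dualFst K A ^ 3 + 27 * dualFst K B ^ 2 ≠ 0) (h : OnCurve A B (x, y, 1)) {m n : ℕ}
    (hm : ptMap (dualFst K) (pmul A B m (x, y, 1)) ≠ 0)
    (hn : ptMap (dualFst K) (pmul A B n (x, y, 1)) ≠ 0)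
    (hmn : ptMap (dualFst K) (pmul A B m (pmul A B n (x, y, 1))) ≠ 0)
    (hnm : ptMap (dualFst K) (pmul A B n (pmul A B m (x, y, 1))) ≠ 0) :
    ProjEq (pmul A B m (pmul A B n (x, y, 1))) (pmul A B n (pmul A B m (x, y, 1))) := by
  refine Proportional.projEq ?_ hmn hnm
  obtain ⟨A', B', T, P, rfl, rfl, hT, hP⟩ := exists_generic_lift h2 hD h
  rw [← hT, ← ptMap_pmul] at hm hn
  rw [← hT, ← ptMap_pmul, ← ptMap_pmul] at hmn hnm
  rw [← hT, ← ptMap_pmul, ← ptMap_pmul, ← ptMap_pmul, ← ptMap_pmul]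
  have hm' := ptMap_algebraMap_ne_zero hm
  have hn' := ptMap_algebraMap_ne_zero hn
  have hmn' := ptMap_algebraMap_ne_zero hmn
  have hnm' := ptMap_algebraMap_ne_zero hnm
  rw [ptMap_pmul] at hm' hn'
  rw [ptMap_pmul, ptMap_pmul] at hmn' hnm'
  have := proportional_pmul_pmul hP hm' hn' hmn' hnm'
  rw [← ptMap_pmul, ← ptMap_pmul, ← ptMap_pmul, ← ptMap_pmul] at this
  exact (proportional_of_ptMap (IsFractionRing.injective _ _) this).ptMap _

lemma exists_affine_of_projEq {T : Pt (DualNumber K)} {x y : K}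
    (h : ProjEq (ptMap (dualFst K) T) (x, y, 1)) : ∃ x' y', ProjEq T (x', y', 1) := by
  obtain ⟨X, Y, Z⟩ := T
  obtain ⟨u, hu⟩ := projEq_iff.1 h
  simp only [ptMap, Prod.smul_mk, smul_eq_mul, Prod.mk.injEq] at hu
  obtain ⟨v, rfl⟩ := dual_isUnit_iff.2 (right_ne_zero_of_mul (hu.2.2 ▸ one_ne_zero))
  exact ⟨_, _, v⁻¹, by rw [v.inv_mul]⟩

/-- A point of the lifted curve reducing to the identity is one of the points `O_k`. -/
lemma exists_projEq_Oinf {A B : DualNumber K} {T : Pt (DualNumber K)} (hT : OnCurve A B T)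
    (h : ProjEq (ptMap (dualFst K) T) (0, 1, 0)) : ∃ a : K, ProjEq T (Oinf a) := by
  obtain ⟨X, Y, Z⟩ := T
  obtain ⟨u, hu⟩ := projEq_iff.1 h
  simp only [ptMap, Prod.smul_mk, smul_eq_mul, Prod.mk.injEq, zero_eq_mul, Units.ne_zero,
    false_or] at hu
  obtain ⟨hX, hY, hZ⟩ := hu
  have hYu : IsUnit Y := by
    rw [dual_isUnit_iff]
    rintro h0
    rw [h0, mul_zero] at hY
    exact one_ne_zero hY
  obtain ⟨v, rfl⟩ := hYu
  have hZ0 : Z = 0 := by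
    simp only [OnCurve] at hT
    have : (v : DualNumber K) ^ 2 * Z = 0 := by
      linear_combination hT + X * dual_mul_eq_zero hX hX + (A * X + B * Z) * dual_mul_eq_zero hZ hZ
    exact (IsUnit.mul_right_eq_zero (v.isUnit.pow 2)).1 this
  subst hZ0
  have hw : dualFst K (↑v⁻¹ * X) = 0 := by rw [map_mul, hX, mul_zero]
  refine ⟨(↑v⁻¹ * X : DualNumber K).snd, projEq_iff.2 ⟨v⁻¹, ?_⟩⟩
  rw [Oinf, ← dual_eq_of_fst_eq_zero hw]
  simp

/-- If `P` has odd characteristic order, then `p • P̃` does not depend on the lift `P̃` of `P`. -/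
lemma pmul_lift_eq {p : ℕ} [CharP K p] (hp : Odd p) (h2 : (2 : K) ≠ 0)
    {A B x y x' y' : DualNumber K} (hD : 4 * dualFst K A ^ 3 + 27 * dualFst K B ^ 2 ≠ 0)
    (h : OnCurve A B (x, y, 1)) (h' : OnCurve A B (x', y', 1))
    (hx : dualFst K x' = dualFst K x) (hy : dualFst K y' = dualFst K y)
    (ht : ProjEq (ptMap (dualFst K) (pmul A B p (x, y, 1))) (0, 1, 0)) :
    ProjEq (pmul A B p (x, y, 1)) (pmul A B p (x', y', 1)) := by
  have hred : ∀ m, ptMap (dualFst K) (pmul A B m (x, y, 1)) =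
      pmul (dualFst K A) (dualFst K B) m (dualFst K x, dualFst K y, 1) := by
    intro m; rw [ptMap_pmul]; simp [ptMap]
  have hE : dualFst K y ^ 2 = dualFst K x ^ 3 + dualFst K A * dualFst K x + dualFst K B := by
    have := h.ptMap (dualFst K)
    simpa [OnCurve, ptMap] using this
  have hrep : Represents (dualFst K A) (dualFst K B) (dualFst K x, dualFst K y, 1)
      (.some _ _ (nonsingular_of_equation hD h2 hE)) := ⟨1, one_ne_zero, by rw [one_smul]⟩
  have hY : ∀ m ≤ p, IsUnit (pmul A B m (x, y, 1)).2.1 := by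
    intro m hm
    rw [dual_isUnit_iff]
    have := hrep.pmul_Y_ne_zero hp (by rwa [← hred]) hm
    rwa [← hred] at this
  have hc : ∀ m ≤ p, OnCurve A B (pmul A B m (x, y, 1)) := by
    intro m hm
    refine onCurve_pmul h2 hD h fun h0 => dual_isUnit_iff.1 (hY m hm) ?_
    exact congrArg (fun P : Pt K => P.2.1) h0
  have hyu : dualFst K y ≠ 0 := by
    have := hrep.pmul_Y_ne_zero hp (by rwa [← hred]) (m := 1) hp.pos
    intro h0
    rw [pmul_succ, pmul_zero, padd_infinity_left] at this
    simp [h0] at this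
  have hxx : dualFst K (x' - x) = 0 := by rw [map_sub, hx, sub_self]
  have hyy : dualFst K (y' - y) = 0 := by rw [map_sub, hy, sub_self]
  obtain ⟨u, rfl⟩ := dual_isUnit_iff.2 hyu
  obtain ⟨w, hw⟩ : ∃ w : DualNumber K, w * 2 = 1 :=
    (dual_isUnit_iff.2 (by rwa [map_ofNat])).exists_left_inv
  obtain ⟨k, hk⟩ : ∃ k : DualNumber K, k * εD K = -(x' - x) * w * ↑u⁻¹ := by
    refine ⟨_, (dual_eq_of_fst_eq_zero ?_).symm⟩
    rw [map_mul, map_mul, map_neg, hxx, neg_zero, zero_mul, zero_mul]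
  have hu := u.mul_inv
  have hshift : Shift A B (εD K) k (x, (u : DualNumber K), 1) (x', y', 1) := by
    simp only [OnCurve] at h h'
    refine shift_of_affine eps_sq u.isUnit (by linear_combination h) ?_ ?_
    · linear_combination (2 * ↑u) * hk - (x' - x) * w * 2 * hu - (x' - x) * hw
    · have := dual_mul_eq_zero hyy hyy
      have h3 := dual_mul_eq_zero hxx hxx
      linear_combination (3 * x ^ 2 + A) * hk + w * ↑u⁻¹ * (h' - h) - w * ↑u⁻¹ * this +
        w * ↑u⁻¹ * (3 * x + (x' - x)) * h3 - (y' - u) * w * 2 * hu - (y' - u) * hw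
  have := hshift.pmul eps_sq hc hY
  have hp0 : (p : DualNumber K) = 0 := by
    rw [← map_natCast (algebraMap K (DualNumber K)), CharP.cast_eq_zero, map_zero]
  rw [hp0, zero_mul] at this
  exact this.projEq

lemma pmul_infinity (A B : K) (n : ℕ) : pmul A B n (0, 1, 0) = (0, 1, 0) := by
  induction n with
  | zero => rfl
  | succ n ih => rw [pmul_succ, ih, padd_infinity_left, one_smul]

/-- The map `k ↦ O_k` turns addition in `K` into addition of points. -/
lemma padd_Oinf (A B : DualNumber K) (k l : K) :
    padd A B (Oinf k) (Oinf l) = Oinf (k + l) := by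
  have h : ιD (k + l) = ιD k + ιD l := TrivSqZeroExt.inl_add K k l
  have he := eps_sq (K := K)
  rw [Oinf, Oinf, Oinf, h]
  refine Prod.ext ?_ (Prod.ext ?_ ?_) <;> simp only [padd]
  · ring
  · linear_combination 3 * A * ιD k * ιD k * ιD l * ιD l * εD K ^ 2 * he
  · linear_combination 3 * ιD k * ιD l * (ιD k + ιD l) * εD K * he

lemma pmul_Oinf (A B : DualNumber K) (n : ℕ) (k : K) : pmul A B n (Oinf k) = Oinf (n * k) := by
  induction n with
  | zero => simp [pmul_zero, Oinf]
  | succ n ih => rw [pmul_succ, ih, padd_Oinf, Nat.cast_succ, add_mul, one_mul]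

lemma Oinf_injective {k l : K} (h : ProjEq (Oinf k) (Oinf l)) : k = l := by
  obtain ⟨u, hu⟩ := h
  simp only [Oinf, Prod.mk.injEq, mul_one] at hu
  obtain ⟨h, hu, -⟩ := hu
  rw [← hu, one_mul] at h
  simpa using (congrArg TrivSqZeroExt.snd h).symm

end DualNumber

/-- Smart-style DLP reduction over the dual numbers: for
`P, Q ∈ E(𝔽_p)[p]` with `Q = nP` and lifts `P̃, Q̃` to `Ẽ(𝔽_p[ε])`, the points
`p·P̃` and `p·Q̃` lie in `Θ`, `p(nP̃) - pQ̃ = O`, and writing `p·P̃ = O_a`,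
`p·Q̃ = O_b` one has `n·a = b` in `𝔽_p`; if `a ≠ 0` then `n ≡ b·a⁻¹ mod p`. -/
theorem smart_dlp_reduction (p : ℕ) [Fact p.Prime] (hp : 3 < p)
    (A B A₁ B₁ : ZMod p) (hD : 4 * A ^ 3 + 27 * B ^ 2 ≠ 0)
    (n : ℕ) (xP yP xQ yQ : ZMod p)
    (hP : yP ^ 2 = xP ^ 3 + A * xP + B) (hQ : yQ ^ 2 = xQ ^ 3 + A * xQ + B)
    (hPtor : ProjEq (pmul A B p ((xP, yP, 1) : Pt (ZMod p))) ((0, 1, 0) : Pt (ZMod p)))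
    (hQtor : ProjEq (pmul A B p ((xQ, yQ, 1) : Pt (ZMod p))) ((0, 1, 0) : Pt (ZMod p)))
    (hQP : ProjEq (pmul A B n ((xP, yP, 1) : Pt (ZMod p))) ((xQ, yQ, 1) : Pt (ZMod p)))
    (xtP ytP xtQ ytQ : DualNumber (ZMod p))
    (hlP : OnCurve (ιD A + ιD A₁ * εD (ZMod p)) (ιD B + ιD B₁ * εD (ZMod p))
      (xtP, ytP, 1))
    (hlQ : OnCurve (ιD A + ιD A₁ * εD (ZMod p)) (ιD B + ιD B₁ * εD (ZMod p))
      (xtQ, ytQ, 1))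
    (hrP : TrivSqZeroExt.fst xtP = xP ∧ TrivSqZeroExt.fst ytP = yP)
    (hrQ : TrivSqZeroExt.fst xtQ = xQ ∧ TrivSqZeroExt.fst ytQ = yQ) :
    (∃ a : ZMod p, ProjEq
      (pmul (ιD A + ιD A₁ * εD (ZMod p)) (ιD B + ιD B₁ * εD (ZMod p)) p (xtP, ytP, 1))
      (Oinf a)) ∧
    (∃ b : ZMod p, ProjEq
      (pmul (ιD A + ιD A₁ * εD (ZMod p)) (ιD B + ιD B₁ * εD (ZMod p)) p (xtQ, ytQ, 1))
      (Oinf b)) ∧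
    ProjEq
      (pmul (ιD A + ιD A₁ * εD (ZMod p)) (ιD B + ιD B₁ * εD (ZMod p)) p
        (pmul (ιD A + ιD A₁ * εD (ZMod p)) (ιD B + ιD B₁ * εD (ZMod p)) n (xtP, ytP, 1)))
      (pmul (ιD A + ιD A₁ * εD (ZMod p)) (ιD B + ιD B₁ * εD (ZMod p)) p (xtQ, ytQ, 1)) ∧
    ∀ a b : ZMod p,
      ProjEq (pmul (ιD A + ιD A₁ * εD (ZMod p)) (ιD B + ιD B₁ * εD (ZMod p)) p
        (xtP, ytP, 1)) (Oinf a) →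
      ProjEq (pmul (ιD A + ιD A₁ * εD (ZMod p)) (ιD B + ιD B₁ * εD (ZMod p)) p
        (xtQ, ytQ, 1)) (Oinf b) →
      (n : ZMod p) * a = b ∧ (a ≠ 0 → (n : ZMod p) = b * a⁻¹) := by
  set A' : DualNumber (ZMod p) := ιD A + ιD A₁ * εD (ZMod p) with hA
  set B' : DualNumber (ZMod p) := ιD B + ιD B₁ * εD (ZMod p) with hB
  have hA' : dualFst (ZMod p) A' = A := by simp [hA]
  have hB' : dualFst (ZMod p) B' = B := by simp [hB]
  have hodd : Odd p := (Fact.out : p.Prime).odd_of_ne_two (by omega)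
  have h2 : (2 : ZMod p) ≠ 0 := by
    intro h
    have h : ((2 : ℕ) : ZMod p) = 0 := by exact_mod_cast h
    rw [ZMod.natCast_eq_zero_iff] at h
    exact absurd (Nat.le_of_dvd two_pos h) (by omega)
  have hD' : 4 * dualFst (ZMod p) A' ^ 3 + 27 * dualFst (ZMod p) B' ^ 2 ≠ 0 := by rwa [hA', hB']
  have hO : ((0, 1, 0) : Pt (ZMod p)) ≠ 0 := by simp
  have hredP : ptMap (dualFst (ZMod p)) (xtP, ytP, 1) = (xP, yP, 1) := by
    rw [← hrP.1, ← hrP.2]; simp [ptMap]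
  have hredQ : ptMap (dualFst (ZMod p)) (xtQ, ytQ, 1) = (xQ, yQ, 1) := by
    rw [← hrQ.1, ← hrQ.2]; simp [ptMap]
  have hred (m : ℕ) (T : Pt (DualNumber (ZMod p))) : ptMap (dualFst (ZMod p)) (pmul A' B' m T) =
      pmul A B m (ptMap (dualFst (ZMod p)) T) := by rw [ptMap_pmul, hA', hB']
  have hpP : ProjEq (ptMap (dualFst (ZMod p)) (pmul A' B' p (xtP, ytP, 1))) (0, 1, 0) := by
    rwa [hred, hredP]
  have hpQ : ProjEq (ptMap (dualFst (ZMod p)) (pmul A' B' p (xtQ, ytQ, 1))) (0, 1, 0) := by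
    rwa [hred, hredQ]
  have hnP : ProjEq (ptMap (dualFst (ZMod p)) (pmul A' B' n (xtP, ytP, 1))) (xQ, yQ, 1) := by
    rwa [hred, hredP]
  have hcnP : OnCurve A' B' (pmul A' B' n (xtP, ytP, 1)) :=
    onCurve_pmul h2 hD' hlP (hnP.ne_zero (by simp))
  have hpnP : ProjEq (pmul A' B' p (pmul A' B' n (xtP, ytP, 1))) (pmul A' B' p (xtQ, ytQ, 1)) := by
    obtain ⟨x, y, h⟩ := exists_affine_of_projEq hnP
    have hc : OnCurve A' B' (x, y, 1) := by
      obtain ⟨u, hu⟩ := projEq_iff.1 h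
      rw [hu]
      exact hcnP.smul _
    have hxy : ProjEq (ptMap (dualFst (ZMod p)) (x, y, 1)) (xQ, yQ, 1) :=
      (h.ptMap _).symm.trans hnP
    obtain ⟨u, hu⟩ := projEq_iff.1 hxy
    simp only [ptMap, map_one, Prod.smul_mk, smul_eq_mul, Prod.mk.injEq, mul_one] at hu
    obtain ⟨hx, hy, hu⟩ := hu
    rw [← hu, one_mul] at hx hy
    refine (h.pmul A' B' p).trans (pmul_lift_eq hodd h2 hD' hlQ hc ?_ ?_ hpQ).symm
    · rw [← hx, ← hrQ.1]; rfl
    · rw [← hy, ← hrQ.2]; rfl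
  refine ⟨exists_projEq_Oinf (onCurve_pmul h2 hD' hlP (hpP.ne_zero hO)) hpP,
    exists_projEq_Oinf (onCurve_pmul h2 hD' hlQ (hpQ.ne_zero hO)) hpQ, hpnP, fun a b ha hb => ?_⟩
  have hcomm := pmul_pmul_comm h2 hD' hlP (hpP.ne_zero hO) (hnP.ne_zero (by simp))
    (((hpnP.ptMap _).trans hpQ).ne_zero hO) (by
      refine ProjEq.ne_zero (Q := (0, 1, 0)) ?_ hO
      have := hpP.pmul A B n
      rwa [pmul_infinity, ← hred] at this)
  have hab : (n : ZMod p) * a = b := by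
    refine Oinf_injective (.trans ?_ hb)
    have := ha.pmul A' B' n
    rw [pmul_Oinf] at this
    exact this.symm.trans (hcomm.symm.trans hpnP)
  exact ⟨hab, fun h0 => (eq_mul_inv_iff_mul_eq₀ h0).2 hab⟩
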